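/- arXiv:1412.4837 — 2 statements merged into one kernel-verified Lean document; each statement's English description precedes it below -/
import Mathlib

section
/- Let d ≥ 1 be an integer and let G^d be the directed multigraph on the same vertex set V obtained by replacing every edge of G by d parallel copies (so G^d is strongly connected and its edge multiplicities satisfy A_{G^d}(v,w) = d·A(v,w)). Then, in ℤ[y], B(G^d,s;y) = B(G,s;y^d) · (1 + y + ⋯ + y^{d−1})^{|V|−1}. -/
open Finset Polynomial

namespace SandpileBM

variable {V E : Type} [Fintype V] [DecidableEq V] [Fintype E] [DecidableEq E]

/-- The number of edges from `v` to `w` in the multigraph given by `src`, `tgt`. -/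
def numEdges (src tgt : E → V) (v w : V) : ℕ :=
  (Finset.univ.filter fun e => src e = v ∧ tgt e = w).card

/-- The out-degree of a vertex. -/
def outdeg (src : E → V) (v : V) : ℕ :=
  (Finset.univ.filter fun e => src e = v).card

/-- The in-degree of a vertex. -/
def indeg (tgt : E → V) (v : V) : ℕ :=
  (Finset.univ.filter fun e => tgt e = v).card

/-- The digraph is strongly connected: any vertex is reachable from any other by
a directed path. -/
def StronglyConnected (src tgt : E → V) : Prop :=
  ∀ v w : V, Relation.ReflTransGen (fun a b => ∃ e : E, src e = a ∧ tgt e = b) v w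

/-- Result of firing the vertex `v` on the chip configuration `c` (sinkless model). -/
def fire (src tgt : E → V) (c : V → ℕ) (v : V) : V → ℕ :=
  fun w => c w + numEdges src tgt v w - (if w = v then outdeg src v else 0)

/-- One legal firing move in the sinkless model. -/
def FireStep (src tgt : E → V) (c d : V → ℕ) : Prop :=
  ∃ v : V, outdeg src v ≤ c v ∧ d = fire src tgt c v

/-- `Reach c d`: `d` is obtained from `c` by a finite sequence of legal firing moves. -/
def Reach (src tgt : E → V) : (V → ℕ) → (V → ℕ) → Prop :=
  Relation.ReflTransGen (FireStep src tgt)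

/-- Stability of a chip configuration. -/
def Stable (src : E → V) (c : V → ℕ) : Prop :=
  ∀ v : V, c v < outdeg src v

/-- A chip configuration is recurrent if it is not stable and every configuration
accessible from it can reach it back. -/
def Recurrent (src tgt : E → V) (c : V → ℕ) : Prop :=
  ¬ Stable src c ∧ ∀ d : V → ℕ, Reach src tgt c d → Reach src tgt d c

/-- Level (total number of chips) of a chip configuration. -/
def lvl (c : V → ℕ) : ℕ := ∑ v : V, c v

/-- Indicator function of the vertex `s`. -/
def deltaS (s : V) : V → ℕ := fun v => if v = s then 1 else 0

/-- Result of firing the vertex `v` on an `s`-configuration. -/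
def sfire (src tgt : E → V) (s : V) (c : {v : V // v ≠ s} → ℕ) (v : {v : V // v ≠ s}) :
    {v : V // v ≠ s} → ℕ :=
  fun w => c w + numEdges src tgt v.1 w.1 - (if w = v then outdeg src v.1 else 0)

/-- One legal s-firing move. -/
def SFireStep (src tgt : E → V) (s : V) (c d : {v : V // v ≠ s} → ℕ) : Prop :=
  ∃ v : {v : V // v ≠ s}, outdeg src v.1 ≤ c v ∧ d = sfire src tgt s c v

/-- `SReach c d`: `d` is obtained from `c` by a finite sequence of legal s-firing moves. -/
def SReach (src tgt : E → V) (s : V) :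
    ({v : V // v ≠ s} → ℕ) → ({v : V // v ≠ s} → ℕ) → Prop :=
  Relation.ReflTransGen (SFireStep src tgt s)

/-- Stability of an `s`-configuration. -/
def SStable (src : E → V) (s : V) (c : {v : V // v ≠ s} → ℕ) : Prop :=
  ∀ v : {v : V // v ≠ s}, c v < outdeg src v.1

/-- The stabilization `c°` of an `s`-configuration: the (for strongly connected digraphs,
unique) stable `s`-configuration reachable from `c` by legal s-firing moves. -/
noncomputable def stab (src tgt : E → V) (s : V) (c : {v : V // v ≠ s} → ℕ) :
    {v : V // v ≠ s} → ℕ :=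
  Classical.epsilon fun d => SReach src tgt s c d ∧ SStable src s d

/-- An `s`-configuration `c` is s-recurrent if every `s`-configuration can be completed
to one whose stabilization is `c`. -/
def SRecurrent (src tgt : E → V) (s : V) (c : {v : V // v ≠ s} → ℕ) : Prop :=
  ∀ c₁ : {v : V // v ≠ s} → ℕ, ∃ c₂ : {v : V // v ≠ s} → ℕ,
    stab src tgt s (c₁ + c₂) = c

/-- `β_s`, recording the number of edges from `s` to each other vertex. -/
def betaS (src tgt : E → V) (s : V) : {v : V // v ≠ s} → ℕ :=
  fun v => numEdges src tgt s v.1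

/-- The relation `~_s` on s-recurrent configurations: `d = (c + k·β_s)°` for some `k`. -/
def SEquiv (src tgt : E → V) (s : V) (c d : {v : V // v ≠ s} → ℕ) : Prop :=
  ∃ k : ℕ, stab src tgt s (c + k • betaS src tgt s) = d

/-- Restriction of a chip configuration to `V ∖ {s}`. -/
def restrictS (s : V) (c : V → ℕ) : {v : V // v ≠ s} → ℕ := fun v => c v.1

/-- Extension `c̄` of an `s`-configuration by `0` at `s`. -/
def extendS (s : V) (c : {v : V // v ≠ s} → ℕ) : V → ℕ :=
  fun v => if h : v = s then 0 else c ⟨v, h⟩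

/-- The s-index `χ(c)`: the least `k` such that `c̄ + k·δ_s` is recurrent. -/
noncomputable def sIndex (src tgt : E → V) (s : V) (c : {v : V // v ≠ s} → ℕ) : ℕ :=
  sInf {k : ℕ | Recurrent src tgt (extendS s c + k • deltaS s)}

/-- `φ(c) := c̄ + χ(c)·δ_s`. -/
noncomputable def phi (src tgt : E → V) (s : V) (c : {v : V // v ≠ s} → ℕ) : V → ℕ :=
  extendS s c + sIndex src tgt s c • deltaS s

/-- The s-level `slvl(c) := χ(c) + Σ_{v ≠ s} c(v)`. -/
noncomputable def slvl (src tgt : E → V) (s : V) (c : {v : V // v ≠ s} → ℕ) : ℕ :=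
  sIndex src tgt s c + ∑ v : {v : V // v ≠ s}, c v

/-- The d-level `dlvl(c) := deg⁺(s) + Σ_{v ≠ s} c(v)`. -/
def dlvl (src : E → V) (s : V) (c : {v : V // v ≠ s} → ℕ) : ℕ :=
  outdeg src s + ∑ v : {v : V // v ≠ s}, c v

/-- The set (as a type) of recurrent chip configurations. -/
abbrev RecL (src tgt : E → V) := {c : V → ℕ // Recurrent src tgt c}

/-- The setoid on recurrent configurations generated by the relation `~` (i.e. `⤳`). -/
def recLSetoid (src tgt : E → V) : Setoid (RecL src tgt) :=
  Relation.EqvGen.setoid fun a b => Reach src tgt a.1 b.1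

/-- The set of `~`-classes of recurrent configurations. -/
abbrev RecLQuot (src tgt : E → V) := Quotient (recLSetoid src tgt)

/-- The set (as a type) of s-recurrent configurations. -/
abbrev RecS (src tgt : E → V) (s : V) := {c : {v : V // v ≠ s} → ℕ // SRecurrent src tgt s c}

/-- The setoid on s-recurrent configurations generated by the relation `~_s`. -/
def recSSetoid (src tgt : E → V) (s : V) : Setoid (RecS src tgt s) :=
  Relation.EqvGen.setoid fun a b => SEquiv src tgt s a.1 b.1

/-- The set of `~_s`-classes of s-recurrent configurations. -/
abbrev RecSQuot (src tgt : E → V) (s : V) := Quotient (recSSetoid src tgt s)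

/-- The level of a `~`-class of recurrent configurations (level is constant on classes). -/
noncomputable def lvlClass (src tgt : E → V) (q : RecLQuot src tgt) : ℕ :=
  sSup ((fun c : RecL src tgt => lvl c.1) '' {c | Quotient.mk (recLSetoid src tgt) c = q})

/-- The s-level of a `~_s`-class (s-level is constant on classes). -/
noncomputable def slvlClass (src tgt : E → V) (s : V) (q : RecSQuot src tgt s) : ℕ :=
  sSup ((fun c : RecS src tgt s => slvl src tgt s c.1) ''
    {c | Quotient.mk (recSSetoid src tgt s) c = q})

/-- The d-level of a `~_s`-class: the maximum d-level over the class. -/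
noncomputable def dlvlClass (src tgt : E → V) (s : V) (q : RecSQuot src tgt s) : ℕ :=
  sSup ((fun c : RecS src tgt s => dlvl src s c.1) ''
    {c | Quotient.mk (recSSetoid src tgt s) c = q})

/-- The Biggs–Merino polynomial `B(G,s;y) = Σ_{[c] ∈ Rec(G,s)/~_s} y^{dlvl([c])}`. -/
noncomputable def BM (src tgt : E → V) (s : V) : Polynomial ℤ :=
  ∑ᶠ q : RecSQuot src tgt s, X ^ dlvlClass src tgt s q

/-- `LegalSeq l c d`: firing the vertices in the list `l` in order is a sequence of
legal firing moves transforming `c` into `d` (sinkless model). -/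
def LegalSeq (src tgt : E → V) : List V → (V → ℕ) → (V → ℕ) → Prop
  | [], c, d => d = c
  | v :: l, c, d => outdeg src v ≤ c v ∧ LegalSeq src tgt l (fire src tgt c v) d

/-- `SLegalSeq l c d`: firing the vertices in the list `l` in order is a sequence of
legal s-firing moves transforming `c` into `d`. -/
def SLegalSeq (src tgt : E → V) (s : V) :
    List {v : V // v ≠ s} → ({v : V // v ≠ s} → ℕ) → ({v : V // v ≠ s} → ℕ) → Prop
  | [], c, d => d = c
  | v :: l, c, d => outdeg src v.1 ≤ c v ∧ SLegalSeq src tgt s l (sfire src tgt s c v) d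

/-- The configuration obtained from `c` after firing the vertices of `l` in order. -/
def iterFire (src tgt : E → V) (c : V → ℕ) (l : List V) : V → ℕ :=
  l.foldl (fire src tgt) c

/-- The Laplacian of the digraph applied to an integer vector:
`(Δq)(v) = deg⁺(v)·q(v) − Σ_w A(w,v)·q(w)`. -/
def lapApply (src tgt : E → V) (q : V → ℤ) : V → ℤ :=
  fun v => (outdeg src v : ℤ) * q v - ∑ w : V, (numEdges src tgt w v : ℤ) * q w

/-- `r` is the primitive period vector of the digraph: it has positive entries with
gcd `1`, lies in the kernel of the Laplacian, and generates this kernel. -/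
def IsPeriodVector (src tgt : E → V) (r : V → ℕ) : Prop :=
  (∀ v : V, 0 < r v) ∧ Finset.univ.gcd r = 1 ∧
    lapApply src tgt (fun v => (r v : ℤ)) = 0 ∧
    ∀ q : V → ℤ, lapApply src tgt q = 0 → ∃ k : ℤ, q = k • fun v => (r v : ℤ)

/-- The Laplacian matrix of the digraph. -/
def lapMatrix (src tgt : E → V) : Matrix V V ℤ :=
  Matrix.of fun v w =>
    if v = w then (outdeg src v : ℤ) - numEdges src tgt v v
    else -(numEdges src tgt w v : ℤ)

/-- The determinant of the reduced Laplacian obtained by deleting the row and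
column indexed by `v`. -/
def reducedLapDet (src tgt : E → V) (v : V) : ℤ :=
  (((lapMatrix src tgt).submatrix (fun a : {w : V // w ≠ v} => a.1)
    (fun a : {w : V // w ≠ v} => a.1)).det)

/-- The period constant `α := gcd_{v ∈ V} det Δ_v`. -/
def periodConstant (src tgt : E → V) : ℤ :=
  Finset.univ.gcd (reducedLapDet src tgt)

/-- `IsWalk l a b`: the list of edges `l` forms a directed walk from `a` to `b`. -/
def IsWalk (src tgt : E → V) : List E → V → V → Prop
  | [], a, b => a = b
  | e :: l, a, b => src e = a ∧ IsWalk src tgt l (tgt e) b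

/-- `IsPath l a b`: the list of edges `l` forms a directed path from `a` to `b`:
all visited vertices are distinct (except that the final vertex is allowed to
coincide with the starting vertex). -/
def IsPath (src tgt : E → V) (l : List E) (a b : V) : Prop :=
  IsWalk src tgt l a b ∧ (l.map tgt).Nodup ∧ a ∉ (l.map tgt).dropLast

/-- `T` is an arborescence rooted at `s`: for every vertex `v` there is a unique
directed path from `s` to `v` using only edges of `T`. -/
def IsArborescence (src tgt : E → V) (s : V) (T : Finset E) : Prop :=
  ∀ v : V, ∃! l : List E, (∀ e ∈ l, e ∈ T) ∧ IsPath src tgt l s v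

/-- The edge `e ∉ T` is externally active for the arborescence `T` (w.r.t. the linear
order on `E`): where `P₁`, `P₂` are the two edge-disjoint directed paths in `T ∪ {e}`
sharing their starting vertex and ending at `tgt e`, with `e ∈ P₁`, the smallest edge
on `P₁ ++ P₂` lies on `P₁`. -/
def ExtActive [LinearOrder E] (src tgt : E → V) (T : Finset E) (e : E) : Prop :=
  e ∉ T ∧ ∃ (u : V) (p₁ p₂ : List E),
    (∀ f ∈ p₁, f ∈ T ∨ f = e) ∧ (∀ f ∈ p₂, f ∈ T ∨ f = e) ∧
    IsPath src tgt p₁ u (tgt e) ∧ IsPath src tgt p₂ u (tgt e) ∧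
    e ∈ p₁ ∧ (∀ f ∈ p₁, f ∉ p₂) ∧
    ∃ fmin ∈ p₁, ∀ f ∈ p₁ ++ p₂, fmin ≤ f

/-- The external activity `e(T)` of an arborescence `T`. -/
noncomputable def extActivity [LinearOrder E] (src tgt : E → V) (T : Finset E) : ℕ :=
  Nat.card {e : E // ExtActive src tgt T e}

/-- The greedoid Tutte polynomial `T(G,s;y) = Σ_{T ∈ A(G,s)} y^{e(T)}`. -/
noncomputable def greedoidTutte [LinearOrder E] (src tgt : E → V) (s : V) : Polynomial ℤ :=
  ∑ᶠ T : {T : Finset E // IsArborescence src tgt s T}, X ^ extActivity src tgt T.1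

/-- `f` is a `G^r`-parking function rooted at `s`. -/
def IsParking (src tgt : E → V) (s : V) (f : {v : V // v ≠ s} → ℕ) : Prop :=
  ∀ A : Finset {v : V // v ≠ s}, A.Nonempty →
    ∃ v ∈ A, f v < Nat.card {e : E // (∀ w ∈ A, src e ≠ w.1) ∧ tgt e = v.1}

/-- The d-level of a `G^r`-parking function: `|E| − |V| + 1 − Σ_{v≠s} f(v)`. -/
noncomputable def parkDlvl (src : E → V) (s : V) (f : {v : V // v ≠ s} → ℕ) : ℕ :=
  ((Fintype.card E : ℤ) - Fintype.card V + 1 - ∑ v : {v : V // v ≠ s}, (f v : ℤ)).toNat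

/-- `σ` is an s-decreasing traversal: a sequence in which every vertex and edge of `G`
appears exactly once, satisfying (R1) every vertex other than `s` is immediately
preceded by an edge targeting it, and (R2) every edge is the `<ₑ`-maximum edge not yet
seen whose source has been seen. -/
def IsTraversal [LinearOrder E] (src tgt : E → V) (s : V) (σ : List (V ⊕ E)) : Prop :=
  σ.Nodup ∧ (∀ x : V ⊕ E, x ∈ σ) ∧
  (∀ (i : ℕ) (hi : i < σ.length) (v : V),
      σ.get ⟨i, hi⟩ = Sum.inl v → v ≠ s →
      0 < i ∧ ∃ e : E, tgt e = v ∧ σ.get ⟨i - 1, by omega⟩ = Sum.inr e) ∧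
  (∀ (i : ℕ) (hi : i < σ.length) (e : E),
      σ.get ⟨i, hi⟩ = Sum.inr e →
      Sum.inl (src e) ∈ σ.take i ∧
      ∀ f : E, Sum.inr f ∉ σ.take i → Sum.inl (src f) ∈ σ.take i → f ≤ e)

open scoped Classical in
/-- `Υ(σ)`: the set of edges immediately preceding a non-sink vertex in `σ`. -/
noncomputable def Upsilon (src tgt : E → V) (s : V) (σ : List (V ⊕ E)) : Finset E :=
  Finset.univ.filter fun e =>
    ∃ (i : ℕ) (hi : i < σ.length) (v : V), v ≠ s ∧ σ.get ⟨i, hi⟩ = Sum.inl v ∧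
      0 < i ∧ ∃ hj : i - 1 < σ.length, σ.get ⟨i - 1, hj⟩ = Sum.inr e

/-- The strength of `σ`: the number of strong edges, i.e. edges whose target appears
before them in `σ`. -/
noncomputable def strength (tgt : E → V) (σ : List (V ⊕ E)) : ℕ :=
  Nat.card {e : E // ∃ (i : ℕ) (hi : i < σ.length),
    σ.get ⟨i, hi⟩ = Sum.inr e ∧ Sum.inl (tgt e) ∈ σ.take i}

/-- `Ψ(σ)(v)`: one less than the number of edges targeting `v` that appear before the
vertex `v` in `σ`. -/
def Psi (tgt : E → V) (s : V) (σ : List (V ⊕ E)) : {v : V // v ≠ s} → ℕ :=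
  fun v =>
    (((σ.takeWhile fun x => x ≠ Sum.inl v.1).filterMap Sum.getRight?).filter
      fun e => tgt e = v.1).length - 1

section Confluence

theorem sfire_diamond (src tgt : E → V) (s : V) (a b c : {v : V // v ≠ s} → ℕ)
    (hb : SFireStep src tgt s a b) (hc : SFireStep src tgt s a c) :
    ∃ e, Relation.ReflGen (SFireStep src tgt s) b e ∧
      Relation.ReflTransGen (SFireStep src tgt s) c e := by
  obtain ⟨v, hv, rfl⟩ := hb
  obtain ⟨w, hw, rfl⟩ := hc
  by_cases h : v = w
  · subst h
    exact ⟨_, Relation.ReflGen.refl, Relation.ReflTransGen.refl⟩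
  · have h' : ¬ w = v := fun e => h e.symm
    refine ⟨sfire src tgt s (sfire src tgt s a v) w,
      Relation.ReflGen.single ⟨w, ?_, rfl⟩, Relation.ReflTransGen.single ⟨v, ?_, ?_⟩⟩
    · simp only [sfire, if_neg h']
      omega
    · simp only [sfire, if_neg h]
      omega
    · funext x
      simp only [sfire]
      by_cases h1 : x = v
      · subst h1
        simp only [if_neg h, if_true]
        omega
      · by_cases h2 : x = w
        · subst h2
          simp only [if_neg h1, if_true]
          omega
        · simp only [if_neg h1, if_neg h2]
          omega

theorem reach_of_stable (src tgt : E → V) (s : V) (a b : {v : V // v ≠ s} → ℕ)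
    (ha : SStable src s a) (h : SReach src tgt s a b) : b = a := by
  rcases Relation.ReflTransGen.cases_head h with h | ⟨c, ⟨v, hv, -⟩, -⟩
  · exact h.symm
  · exact absurd (ha v) (not_lt.mpr hv)

theorem stable_unique (src tgt : E → V) (s : V) (c a b : {v : V // v ≠ s} → ℕ)
    (h1 : SReach src tgt s c a) (ha : SStable src s a)
    (h2 : SReach src tgt s c b) (hb : SStable src s b) : a = b := by
  obtain ⟨e, h3, h4⟩ := Relation.church_rosser (sfire_diamond src tgt s) h1 h2
  rw [← reach_of_stable src tgt s a e ha h3, reach_of_stable src tgt s b e hb h4]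

theorem stab_eq (src tgt : E → V) (s : V) (c a : {v : V // v ≠ s} → ℕ)
    (h1 : SReach src tgt s c a) (ha : SStable src s a) : stab src tgt s c = a := by
  have h := Classical.epsilon_spec (p := fun d => SReach src tgt s c d ∧ SStable src s d)
    ⟨a, h1, ha⟩
  exact stable_unique src tgt s c _ a h.1 h.2 h1 ha

end Confluence

section Termination

/-- There is a directed walk of length `n` from `v` to `s`. -/
def walkTo (src tgt : E → V) (s : V) : ℕ → V → Prop
  | 0, v => v = s
  | n + 1, v => ∃ e, src e = v ∧ walkTo src tgt s n (tgt e)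

theorem exists_walkTo (src tgt : E → V) (hG : StronglyConnected src tgt) (s v : V) :
    ∃ n, walkTo src tgt s n v := by
  refine Relation.ReflTransGen.head_induction_on (hG v s) ⟨0, rfl⟩ ?_
  rintro a c ⟨e, he, rfl⟩ - ⟨n, hn⟩
  exact ⟨n + 1, e, he, hn⟩

theorem exists_weight (src tgt : E → V) (hG : StronglyConnected src tgt) (s : V) (K : ℕ)
    (hK : 1 ≤ K) :
    ∃ g : V → ℕ, (∀ v, 0 < g v) ∧ (∀ v, g v ≤ g s) ∧
      ∀ v, v ≠ s → ∃ e, src e = v ∧ K * g v ≤ g (tgt e) := by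
  classical
  set dist : V → ℕ := fun v => Nat.find (exists_walkTo src tgt hG s v) with hdist
  set L := Finset.univ.sup dist
  have hL : ∀ v, dist v ≤ L := fun v => Finset.le_sup (Finset.mem_univ v)
  have hs : dist s = 0 := (Nat.find_eq_zero _).2 rfl
  refine ⟨fun v => K ^ (L - dist v), fun v => pow_pos hK _, fun v => ?_, fun v hv => ?_⟩
  · exact Nat.pow_le_pow_right hK (by omega)
  · have h := Nat.find_spec (exists_walkTo src tgt hG s v)
    change walkTo src tgt s (dist v) v at h
    have hLv := hL v
    cases hn : dist v with
    | zero => rw [hn] at h; exact absurd h hv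
    | succ n =>
      rw [hn] at h
      obtain ⟨e, he, hw⟩ := h
      have h2 : dist (tgt e) ≤ n := Nat.find_min' _ hw
      refine ⟨e, he, ?_⟩
      dsimp only
      rw [hn, ← pow_succ']
      exact Nat.pow_le_pow_right hK (by omega)

theorem sum_numEdges (src tgt : E → V) (v : V) (f : V → ℤ) :
    ∑ w, (numEdges src tgt v w : ℤ) * f w = ∑ e with src e = v, f (tgt e) := by
  rw [← Finset.sum_fiberwise (Finset.univ.filter fun e => src e = v) tgt]
  refine Finset.sum_congr rfl fun w _ => ?_
  rw [Finset.sum_congr rfl (g := fun _ => f w)]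
  · rw [Finset.sum_const, Finset.filter_filter, nsmul_eq_mul]; rfl
  · intro e he
    rw [(Finset.mem_filter.1 he).2]

theorem exists_stab (src tgt : E → V) (hG : StronglyConnected src tgt) (s : V)
    (c : {v : V // v ≠ s} → ℕ) :
    ∃ a, SReach src tgt s c a ∧ SStable src s a := by
  obtain ⟨g, hpos, hle, hg⟩ := exists_weight src tgt hG s (Fintype.card E + 1) (by omega)
  set f : V → ℤ := fun v => (g s : ℤ) - g v with hf
  have hf0 : ∀ v, 0 ≤ f v := fun v => by
    have := hle v
    simp only [hf]; omega
  set Φ : ({v : V // v ≠ s} → ℕ) → ℤ := fun c => ∑ v, (c v : ℤ) * f v.1 with hΦ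
  have hΦ0 : ∀ c, 0 ≤ Φ c := fun c => Finset.sum_nonneg fun v _ =>
    mul_nonneg (Int.natCast_nonneg _) (hf0 _)
  have key : ∀ (c : {v : V // v ≠ s} → ℕ) v, outdeg src v.1 ≤ c v →
      Φ (sfire src tgt s c v) < Φ c := by
    intro c v hv
    have e1 : ∀ w, ((sfire src tgt s c v w : ℕ) : ℤ)
        = c w + numEdges src tgt v.1 w.1 - (if w = v then (outdeg src v.1 : ℤ) else 0) := by
      intro w
      simp only [sfire]
      by_cases h : w = v
      · subst h
        simp only [if_true]
        omega
      · simp only [if_neg h]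
        omega
    have e2 : Φ (sfire src tgt s c v) = Φ c + ∑ w : {v : V // v ≠ s},
        (numEdges src tgt v.1 w.1 : ℤ) * f w.1 - outdeg src v.1 * f v.1 := by
      simp only [hΦ, e1, sub_mul, add_mul, Finset.sum_sub_distrib, Finset.sum_add_distrib,
        ite_mul, zero_mul, Finset.sum_ite_eq', Finset.mem_univ, if_true]
    have e3 : ∑ w : {v : V // v ≠ s}, (numEdges src tgt v.1 w.1 : ℤ) * f w.1
        = ∑ w, (numEdges src tgt v.1 w : ℤ) * f w := by
      have hs0 : f s = 0 := by simp [hf]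
      rw [← Finset.sum_subtype (Finset.univ.filter (· ≠ s)) (p := fun w => w ≠ s) (by simp)
        (fun w => (numEdges src tgt v.1 w : ℤ) * f w)]
      refine Finset.sum_subset (Finset.subset_univ _) fun w _ hw => ?_
      have hws : w = s := by simpa using hw
      rw [hws, hs0, mul_zero]
    have e4 : ∑ e with src e = v.1, f (tgt e) < outdeg src v.1 * f v.1 := by
      obtain ⟨e, he, hge⟩ := hg v.1 v.2
      have h1 : (g (tgt e) : ℤ) ≤ ∑ e with src e = v.1, (g (tgt e) : ℤ) :=
        Finset.single_le_sum (f := fun e => (g (tgt e) : ℤ))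
          (fun _ _ => Int.natCast_nonneg _) (by simp [he])
      have h2 : outdeg src v.1 ≤ Fintype.card E := Finset.card_le_univ _
      have h3 := hpos v.1
      have h4 : outdeg src v.1 * g v.1 < g (tgt e) := by nlinarith
      have h5 : ((outdeg src v.1 : ℕ) : ℤ) * g v.1 < g (tgt e) := by exact_mod_cast h4
      simp only [hf, Finset.sum_sub_distrib, Finset.sum_const, nsmul_eq_mul]
      change ((outdeg src v.1 : ℕ) : ℤ) * _ - _ < _
      linarith
    rw [e2, e3, sum_numEdges]
    linarith
  have main : ∀ n : ℕ, ∀ c, (Φ c).toNat ≤ n → ∃ a, SReach src tgt s c a ∧ SStable src s a := by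
    intro n
    induction n with
    | zero =>
      intro c hc
      refine ⟨c, Relation.ReflTransGen.refl, fun v => ?_⟩
      by_contra hv
      have h1 := key c v (not_lt.1 hv)
      have h2 := hΦ0 (sfire src tgt s c v)
      omega
    | succ n ih =>
      intro c hc
      by_cases hs : SStable src s c
      · exact ⟨c, Relation.ReflTransGen.refl, hs⟩
      · simp only [SStable, not_forall, not_lt] at hs
        obtain ⟨v, hv⟩ := hs
        have h1 := key c v hv
        have h2 := hΦ0 (sfire src tgt s c v)
        obtain ⟨a, ha, hs⟩ := ih (sfire src tgt s c v) (by omega)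
        exact ⟨a, Relation.ReflTransGen.head ⟨v, hv, rfl⟩ ha, hs⟩
  exact main _ c le_rfl

theorem stab_spec (src tgt : E → V) (hG : StronglyConnected src tgt) (s : V)
    (c : {v : V // v ≠ s} → ℕ) :
    SReach src tgt s c (stab src tgt s c) ∧ SStable src s (stab src tgt s c) :=
  Classical.epsilon_spec (p := fun d => SReach src tgt s c d ∧ SStable src s d)
    (exists_stab src tgt hG s c)

theorem finite_RecS (src tgt : E → V) (hG : StronglyConnected src tgt) (s : V) :
    Finite (RecS src tgt s) := by
  refine Finite.of_injective
    (β := (v : {v : V // v ≠ s}) → Fin (outdeg src v.1))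
    (fun c v => ⟨c.1 v, ?_⟩) ?_
  · obtain ⟨c₂, h⟩ := c.2 0
    rw [← h]
    exact (stab_spec src tgt hG s _).2 v
  · intro a b h
    apply Subtype.ext
    funext v
    exact congrArg Fin.val (congrFun h v)

end Termination

section Copies

theorem numEdges_copies (src tgt : E → V) (d : ℕ) (v w : V) :
    numEdges (fun p : E × Fin d => src p.1) (fun p : E × Fin d => tgt p.1) v w
      = d * numEdges src tgt v w := by
  unfold numEdges
  have : (Finset.univ.filter fun p : E × Fin d => src p.1 = v ∧ tgt p.1 = w)
      = (Finset.univ.filter fun e => src e = v ∧ tgt e = w) ×ˢ Finset.univ := by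
    ext ⟨e, i⟩; simp
  rw [this, Finset.card_product, Finset.card_univ, Fintype.card_fin, mul_comm]

theorem outdeg_copies (src : E → V) (d : ℕ) (v : V) :
    outdeg (fun p : E × Fin d => src p.1) v = d * outdeg src v := by
  unfold outdeg
  have : (Finset.univ.filter fun p : E × Fin d => src p.1 = v)
      = (Finset.univ.filter fun e => src e = v) ×ˢ Finset.univ := by
    ext ⟨e, i⟩; simp
  rw [this, Finset.card_product, Finset.card_univ, Fintype.card_fin, mul_comm]

/-- Combine quotient and remainder. -/
def emb {ι : Type} (d : ℕ) (q : ι → ℕ) (r : ι → Fin d) : ι → ℕ := fun v => d * q v + r v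

theorem emb_inj {ι : Type} {d : ℕ} {q q' : ι → ℕ} {r r' : ι → Fin d}
    (h : emb d q r = emb d q' r') : q = q' ∧ r = r' := by
  have h1 : ∀ v, d * q v + (r v : ℕ) = d * q' v + r' v := fun v => congrFun h v
  constructor
  · funext v
    have h2 := congrArg (· / d) (h1 v)
    have hd : 0 < d := (r v).pos
    simpa [Nat.mul_add_div hd, Nat.div_eq_of_lt (r v).2, Nat.div_eq_of_lt (r' v).2] using h2
  · funext v
    have h2 := congrArg (· % d) (h1 v)
    apply Fin.ext
    simpa [Nat.mul_add_mod, Nat.mod_eq_of_lt (r v).2, Nat.mod_eq_of_lt (r' v).2] using h2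

theorem exists_emb {ι : Type} {d : ℕ} (hd : 1 ≤ d) (c : ι → ℕ) :
    ∃ q r, c = emb d q r :=
  ⟨fun v => c v / d, fun v => ⟨c v % d, Nat.mod_lt _ hd⟩, by
    funext v; exact (Nat.div_add_mod _ _).symm⟩

theorem emb_add {ι : Type} (d : ℕ) (q q' : ι → ℕ) (r : ι → Fin d) :
    emb d q r + d • q' = emb d (q + q') r := by
  funext v
  simp only [emb, Pi.add_apply, Pi.smul_apply, smul_eq_mul]
  ring

variable (src tgt : E → V) (s : V) (d : ℕ)

theorem emb_reach (q q' : {v : V // v ≠ s} → ℕ) (r : {v : V // v ≠ s} → Fin d)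
    (h : SReach src tgt s q q') :
    SReach (fun p : E × Fin d => src p.1) (fun p : E × Fin d => tgt p.1) s
      (emb d q r) (emb d q' r) := by
  refine Relation.ReflTransGen.lift (p := SFireStep (fun p : E × Fin d => src p.1)
    (fun p : E × Fin d => tgt p.1) s) (fun q => emb d q r) ?_ _ _ h
  rintro a b ⟨v, hv, rfl⟩
  refine ⟨v, ?_, ?_⟩
  · rw [outdeg_copies]
    exact (Nat.mul_le_mul_left d hv).trans (Nat.le_add_right _ _)
  · funext w
    simp only [sfire, emb, outdeg_copies, numEdges_copies]
    by_cases h : w = v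
    · subst h
      have := Nat.mul_le_mul_left d hv
      simp only [if_true, Nat.mul_sub, Nat.mul_add]
      omega
    · simp only [if_neg h, Nat.sub_zero, Nat.mul_add]
      omega

theorem emb_stable (q : {v : V // v ≠ s} → ℕ) (r : {v : V // v ≠ s} → Fin d)
    (h : SStable src s q) : SStable (fun p : E × Fin d => src p.1) s (emb d q r) := by
  intro v
  rw [outdeg_copies]
  have h1 := Nat.mul_le_mul_left d (Nat.succ_le_of_lt (h v))
  have h2 := (r v).2
  simp only [emb]
  rw [Nat.mul_succ] at h1
  omega

theorem stab_emb (hG : StronglyConnected src tgt) (q : {v : V // v ≠ s} → ℕ)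
    (r : {v : V // v ≠ s} → Fin d) :
    stab (fun p : E × Fin d => src p.1) (fun p : E × Fin d => tgt p.1) s (emb d q r)
      = emb d (stab src tgt s q) r :=
  stab_eq _ _ s _ _ (emb_reach src tgt s d _ _ r (stab_spec src tgt hG s q).1)
    (emb_stable src s d _ r (stab_spec src tgt hG s q).2)

theorem rec_emb (hG : StronglyConnected src tgt) (hd : 1 ≤ d) (q : {v : V // v ≠ s} → ℕ)
    (r : {v : V // v ≠ s} → Fin d) :
    SRecurrent (fun p : E × Fin d => src p.1) (fun p : E × Fin d => tgt p.1) s (emb d q r)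
      ↔ SRecurrent src tgt s q := by
  constructor
  · intro h q₁
    obtain ⟨c₂, hc⟩ := h (d • q₁)
    obtain ⟨q₂, r₂, rfl⟩ := exists_emb hd c₂
    rw [add_comm, emb_add, stab_emb src tgt s d hG] at hc
    refine ⟨q₂, ?_⟩
    rw [add_comm]
    exact (emb_inj hc).1
  · intro h c₁
    obtain ⟨q₂, hq⟩ := h (c₁)
    have hle : ∀ v, c₁ v ≤ d * c₁ v := fun v => Nat.le_mul_of_pos_left _ hd
    refine ⟨fun v => (d * c₁ v - c₁ v) + d * q₂ v + r v, ?_⟩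
    have : c₁ + (fun v => (d * c₁ v - c₁ v) + d * q₂ v + r v) = emb d (c₁ + q₂) r := by
      funext v
      have := hle v
      simp only [emb, Pi.add_apply, Nat.mul_add]
      omega
    rw [this, stab_emb src tgt s d hG, hq]

theorem sequiv_emb (hG : StronglyConnected src tgt) (q q' : {v : V // v ≠ s} → ℕ)
    (r r' : {v : V // v ≠ s} → Fin d) :
    SEquiv (fun p : E × Fin d => src p.1) (fun p : E × Fin d => tgt p.1) s
      (emb d q r) (emb d q' r') ↔ SEquiv src tgt s q q' ∧ r = r' := by
  have hβ : ∀ k : ℕ, emb d q r +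
      k • betaS (fun p : E × Fin d => src p.1) (fun p : E × Fin d => tgt p.1) s
      = emb d (q + k • betaS src tgt s) r := by
    intro k
    rw [← emb_add]
    funext v
    simp only [betaS, numEdges_copies, Pi.add_apply, Pi.smul_apply, smul_eq_mul]
    ring
  constructor
  · rintro ⟨k, hk⟩
    rw [hβ, stab_emb src tgt s d hG] at hk
    exact ⟨⟨k, (emb_inj hk).1⟩, (emb_inj hk).2⟩
  · rintro ⟨⟨k, hk⟩, rfl⟩
    refine ⟨k, ?_⟩
    rw [hβ, stab_emb src tgt s d hG, hk]

theorem dlvl_emb (q : {v : V // v ≠ s} → ℕ) (r : {v : V // v ≠ s} → Fin d) :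
    dlvl (fun p : E × Fin d => src p.1) s (emb d q r)
      = d * dlvl src s q + ∑ v, (r v : ℕ) := by
  simp only [dlvl, outdeg_copies, emb, Finset.sum_add_distrib, ← Finset.mul_sum]
  ring

/-- `emb` on recurrent configurations. -/
def embR (hG : StronglyConnected src tgt) (hd : 1 ≤ d) (q : RecS src tgt s)
    (r : {v : V // v ≠ s} → Fin d) :
    RecS (fun p : E × Fin d => src p.1) (fun p : E × Fin d => tgt p.1) s :=
  ⟨emb d q.1 r, (rec_emb src tgt s d hG hd q.1 r).2 q.2⟩

theorem exists_embR (hG : StronglyConnected src tgt) (hd : 1 ≤ d)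
    (c : RecS (fun p : E × Fin d => src p.1) (fun p : E × Fin d => tgt p.1) s) :
    ∃ q r, c = embR src tgt s d hG hd q r := by
  obtain ⟨c, hc⟩ := c
  obtain ⟨q, r, rfl⟩ := exists_emb hd c
  exact ⟨⟨q, (rec_emb src tgt s d hG hd q r).1 hc⟩, r, rfl⟩

theorem embR_rel (hG : StronglyConnected src tgt) (hd : 1 ≤ d) (q q' : RecS src tgt s)
    (r r' : {v : V // v ≠ s} → Fin d) :
    (recSSetoid (fun p : E × Fin d => src p.1) (fun p : E × Fin d => tgt p.1) s).r
      (embR src tgt s d hG hd q r) (embR src tgt s d hG hd q' r') ↔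
    (recSSetoid src tgt s).r q q' ∧ r = r' := by
  constructor
  · intro h
    have gen : ∀ a b, Relation.EqvGen (fun a b : RecS (fun p : E × Fin d => src p.1)
        (fun p : E × Fin d => tgt p.1) s => SEquiv (fun p : E × Fin d => src p.1)
        (fun p : E × Fin d => tgt p.1) s a.1 b.1) a b → ∀ q q' r r',
        a = embR src tgt s d hG hd q r → b = embR src tgt s d hG hd q' r' →
        Relation.EqvGen (fun a b : RecS src tgt s => SEquiv src tgt s a.1 b.1) q q' ∧ r = r' := by
      intro a b hab
      induction hab with
      | rel a b h =>
        rintro q q' r r' rfl rfl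
        have := (sequiv_emb src tgt s d hG q.1 q'.1 r r').1 h
        exact ⟨.rel _ _ this.1, this.2⟩
      | refl a =>
        rintro q q' r r' rfl h
        have := emb_inj (congrArg Subtype.val h)
        rw [Subtype.ext this.1]
        exact ⟨.refl _, this.2⟩
      | symm a b _ ih =>
        intro q q' r r' h1 h2
        have := ih q' q r' r h2 h1
        exact ⟨.symm _ _ this.1, this.2.symm⟩
      | trans a b c _ _ ih1 ih2 =>
        intro q q' r r' h1 h2
        obtain ⟨q'', r'', h3⟩ := exists_embR src tgt s d hG hd b
        have i1 := ih1 q q'' r r'' h1 h3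
        have i2 := ih2 q'' q' r'' r' h3 h2
        exact ⟨.trans _ _ _ i1.1 i2.1, i1.2.trans i2.2⟩
    exact gen _ _ h _ _ _ _ rfl rfl
  · rintro ⟨h, rfl⟩
    change Relation.EqvGen _ q q' at h
    change Relation.EqvGen _ _ _
    induction h with
    | rel a b h => exact .rel _ _ ((sequiv_emb src tgt s d hG a.1 b.1 r r).2 ⟨h, rfl⟩)
    | refl a => exact .refl _
    | symm a b _ ih => exact .symm _ _ ih
    | trans a b c _ _ ih1 ih2 => exact .trans _ _ _ ih1 ih2

/-- The induced map on classes. -/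
def embQ (hG : StronglyConnected src tgt) (hd : 1 ≤ d)
    (x : RecSQuot src tgt s × ({v : V // v ≠ s} → Fin d)) :
    RecSQuot (fun p : E × Fin d => src p.1) (fun p : E × Fin d => tgt p.1) s :=
  Quotient.liftOn x.1 (fun q => Quotient.mk _ (embR src tgt s d hG hd q x.2))
    fun q q' h => Quotient.sound ((embR_rel src tgt s d hG hd q q' x.2 x.2).2 ⟨h, rfl⟩)

theorem embQ_bij (hG : StronglyConnected src tgt) (hd : 1 ≤ d) :
    Function.Bijective (embQ src tgt s d hG hd) := by
  constructor
  · rintro ⟨q, r⟩ ⟨q', r'⟩ h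
    induction q using Quotient.inductionOn with | h q =>
    induction q' using Quotient.inductionOn with | h q' =>
    have := (embR_rel src tgt s d hG hd q q' r r').1 (Quotient.exact h)
    exact Prod.ext (Quotient.sound this.1) this.2
  · intro c
    induction c using Quotient.inductionOn with | h c =>
    obtain ⟨q, r, rfl⟩ := exists_embR src tgt s d hG hd c
    exact ⟨(Quotient.mk _ q, r), rfl⟩

theorem dlvlClass_embQ (hG : StronglyConnected src tgt) (hd : 1 ≤ d)
    (x : RecSQuot src tgt s) (r : {v : V // v ≠ s} → Fin d) :
    dlvlClass (fun p : E × Fin d => src p.1) (fun p : E × Fin d => tgt p.1) s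
      (embQ src tgt s d hG hd (x, r)) = d * dlvlClass src tgt s x + ∑ v, (r v : ℕ) := by
  have := finite_RecS src tgt hG s
  induction x using Quotient.inductionOn with | h q =>
  have hne : ((fun c : RecS src tgt s => dlvl src s c.1) ''
    {c | Quotient.mk (recSSetoid src tgt s) c = Quotient.mk _ q}).Nonempty :=
    ⟨_, q, rfl, rfl⟩
  have hbd : BddAbove ((fun c : RecS src tgt s => dlvl src s c.1) ''
    {c | Quotient.mk (recSSetoid src tgt s) c = Quotient.mk _ q}) :=
    (Set.toFinite _).bddAbove
  obtain ⟨q₀, h0, h1⟩ := Nat.sSup_mem hne hbd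
  apply IsGreatest.csSup_eq
  constructor
  · refine ⟨embR src tgt s d hG hd q₀ r, ?_, ?_⟩
    · exact Quotient.sound ((embR_rel src tgt s d hG hd q₀ q r r).2 ⟨Quotient.exact h0, rfl⟩)
    · change dlvl _ s (emb d q₀.1 r) = _
      rw [dlvl_emb]
      dsimp only at h1
      rw [h1]; rfl
  · rintro _ ⟨c, hc, rfl⟩
    obtain ⟨q', r', rfl⟩ := exists_embR src tgt s d hG hd c
    obtain ⟨h2, rfl⟩ := (embR_rel src tgt s d hG hd q' q r' r).1 (Quotient.exact hc)
    change dlvl _ s (emb d q'.1 r') ≤ _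
    rw [dlvl_emb]
    exact Nat.add_le_add_right (Nat.mul_le_mul_left d
      (le_csSup hbd ⟨q', Quotient.sound h2, rfl⟩)) _

end Copies

/-- For `d ≥ 1`, the Biggs–Merino polynomial of the digraph `G^d`
obtained by replacing every edge of `G` by `d` parallel copies satisfies
`B(G^d,s;y) = B(G,s;y^d)·(1 + y + ⋯ + y^{d−1})^{|V|−1}`. -/
theorem biggsMerino_parallel_copies [Nonempty V] (src tgt : E → V)
    (hG : StronglyConnected src tgt) (s : V) (d : ℕ) (hd : 1 ≤ d) :
    BM (fun p : E × Fin d => src p.1) (fun p : E × Fin d => tgt p.1) s =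
      (BM src tgt s).comp ((X : Polynomial ℤ) ^ d) *
        (∑ i ∈ Finset.range d, (X : Polynomial ℤ) ^ i) ^ (Fintype.card V - 1) := by
  have := finite_RecS src tgt hG s
  have hq : Finite (RecSQuot src tgt s) := inferInstance
  have := Fintype.ofFinite (RecSQuot src tgt s)
  unfold BM
  rw [← finsum_comp_equiv (Equiv.ofBijective _ (embQ_bij src tgt s d hG hd))]
  rw [finsum_eq_sum_of_fintype, finsum_eq_sum_of_fintype, Polynomial.sum_comp,
    Finset.sum_mul, Fintype.sum_prod_type]
  refine Finset.sum_congr rfl fun q _ => ?_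
  have hc : Fintype.card V - 1 = Fintype.card {v : V // v ≠ s} := by
    simp [Fintype.card_subtype_compl]
  have hp : (∑ i ∈ Finset.range d, (X : Polynomial ℤ) ^ i) ^ (Fintype.card V - 1)
      = ∑ r : {v : V // v ≠ s} → Fin d, ∏ v, (X : Polynomial ℤ) ^ (r v : ℕ) := by
    rw [hc, ← Fin.sum_univ_eq_sum_range (fun i => (X : Polynomial ℤ) ^ i), ← Finset.card_univ,
      ← Finset.prod_const, Finset.prod_univ_sum, Fintype.piFinset_univ]
  rw [hp, Finset.mul_sum]
  refine Finset.sum_congr rfl fun r _ => ?_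
  rw [Equiv.ofBijective_apply, dlvlClass_embQ, pow_add, pow_mul, Finset.prod_pow_eq_pow_sum]
  simp

end SandpileBM
end

section
/- The map Ψ, sending an s-decreasing traversal σ to the function Ψ(σ) : V∖{s} → ℕ defined by (Ψ(σ))(v) := #{edges e appearing in σ before the vertex v with tgt(e) = v} − 1 (this count is at least 1 by (R1), so Ψ(σ) is well defined), is a bijection from D(G,s), the set of s-decreasing traversals of G, onto Park(G,s), the set of G^r-parking functions rooted at s. -/
open Finset Polynomial

namespace SandpileBM

variable {V E : Type} [Fintype V] [DecidableEq V] [Fintype E] [DecidableEq E]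

/-- Number of edges with target `v` in a list. -/
def cnt (tgt : E → V) (p : List (V ⊕ E)) (v : V) : ℕ :=
  ((p.filterMap Sum.getRight?).filter fun e => tgt e = v).length

theorem cnt_append (tgt : E → V) (p q : List (V ⊕ E)) (v : V) :
    cnt tgt (p ++ q) v = cnt tgt p v + cnt tgt q v := by
  simp [cnt, List.filterMap_append, List.filter_append]

theorem cnt_edge (tgt : E → V) (e : E) (v : V) :
    cnt tgt [Sum.inr e] v = if tgt e = v then 1 else 0 := by
  by_cases h : tgt e = v <;> simp [cnt, h]

theorem cnt_vert (tgt : E → V) (w v : V) :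
    cnt tgt ([Sum.inl w] : List (V ⊕ E)) v = 0 := by
  simp [cnt]

theorem cnt_eq_card (tgt : E → V) (p : List (V ⊕ E)) (hp : p.Nodup) (v : V) :
    cnt tgt p v = Nat.card {e : E // Sum.inr e ∈ p ∧ tgt e = v} := by
  classical
  have hn : ((p.filterMap Sum.getRight?).filter fun e => tgt e = v).Nodup := by
    apply List.Nodup.filter
    apply List.Nodup.filterMap _ hp
    intro a a' b hb hb'
    cases a <;> cases a' <;> simp_all
  rw [cnt, ← List.toFinset_card_of_nodup hn, Nat.card_eq_fintype_card]
  symm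
  apply Fintype.card_of_subtype
  intro e
  simp [List.mem_filterMap]

theorem psi_eq (tgt : E → V) (s : V) (a b : List (V ⊕ E)) (v : {v : V // v ≠ s})
    (h : Sum.inl v.1 ∉ a) : Psi tgt s (a ++ Sum.inl v.1 :: b) v = cnt tgt a v.1 - 1 := by
  unfold Psi cnt
  rw [List.takeWhile_append_of_pos]
  · simp
  · intro x hx
    simp only [ne_eq, decide_not, Bool.not_eq_eq_eq_not, Bool.not_true, decide_eq_false_iff_not]
    rintro rfl
    exact h hx

/-- Rule (R1), in terms of splittings of the list. -/
def R1 (tgt : E → V) (s : V) (σ : List (V ⊕ E)) : Prop :=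
  ∀ a b v, σ = a ++ Sum.inl v :: b → v ≠ s → ∃ a' e, a = a' ++ [Sum.inr e] ∧ tgt e = v

/-- Rule (R2), in terms of splittings of the list. -/
def R2 [LinearOrder E] (src : E → V) (σ : List (V ⊕ E)) : Prop :=
  ∀ a b e, σ = a ++ Sum.inr e :: b → Sum.inl (src e) ∈ a ∧
    ∀ f : E, Sum.inr f ∉ a → Sum.inl (src f) ∈ a → f ≤ e

theorem isTraversal_iff [LinearOrder E] (src tgt : E → V) (s : V) (σ : List (V ⊕ E)) :
    IsTraversal src tgt s σ ↔ σ.Nodup ∧ (∀ x, x ∈ σ) ∧ R1 tgt s σ ∧ R2 src σ := by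
  unfold IsTraversal
  refine and_congr Iff.rfl (and_congr Iff.rfl (and_congr ⟨?_, ?_⟩ ⟨?_, ?_⟩))
  · rintro h a b v rfl hv
    obtain ⟨h0, e, he, h2⟩ := h a.length (by simp) v (by simp) hv
    rcases List.eq_nil_or_concat a with rfl | ⟨a', x, rfl⟩
    · simp at h0
    · refine ⟨a', e, ?_, he⟩
      simp at h2
      simp [h2]
  · intro h i hi v hv hvs
    have hs : σ = σ.take i ++ Sum.inl v :: σ.drop (i + 1) := by
      rw [← hv]; simp
    obtain ⟨a', e, ha, he⟩ := h _ _ _ hs hvs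
    have hl := congrArg List.length ha
    simp at hl
    refine ⟨by omega, e, he, ?_⟩
    have h3 : (σ.take i)[i-1]? = some (Sum.inr e) := by
      rw [ha, show i - 1 = a'.length by omega]; simp
    rw [List.getElem?_take_of_lt (by omega), List.getElem?_eq_some_iff] at h3
    exact h3.2
  · rintro h a b e rfl
    have := h a.length (by simp) e (by simp)
    simpa using this
  · intro h i hi e he
    have hs : σ = σ.take i ++ Sum.inr e :: σ.drop (i + 1) := by
      rw [← he]; simp
    exact h _ _ _ hs

theorem split_snoc {α : Type} {p a b : List α} {x y : α} (h : p ++ [x] = a ++ y :: b) :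
    (b = [] ∧ p = a ∧ x = y) ∨ ∃ b', p = a ++ y :: b' := by
  rcases List.eq_nil_or_concat b with rfl | ⟨b', z, rfl⟩
  · left
    have := List.append_inj' h rfl
    simpa using this
  · right
    refine ⟨b', ?_⟩
    have h' : p ++ [x] = (a ++ y :: b') ++ [z] := by simpa using h
    exact (List.append_inj' h' rfl).1

theorem head_eq [LinearOrder E] {src tgt : E → V} {s : V} {σ : List (V ⊕ E)}
    (h1 : R1 tgt s σ) (h2 : R2 src σ) (hne : σ ≠ []) : ∃ b, σ = Sum.inl s :: b := by
  rcases σ with _ | ⟨x, b⟩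
  · exact absurd rfl hne
  rcases x with v | e
  · by_cases hv : v = s
    · exact ⟨b, by rw [hv]⟩
    · obtain ⟨a', e, h, -⟩ := h1 [] b v rfl hv
      simp at h
  · have := (h2 [] b e rfl).1
    simp at this

theorem first_of {α : Type} (P : α → Prop) (l : List α) (h : ∃ x ∈ l, P x) :
    ∃ a x b, l = a ++ x :: b ∧ P x ∧ ∀ y ∈ a, ¬ P y := by
  induction l with
  | nil => simp at h
  | cons z l ih =>
    by_cases hz : P z
    · exact ⟨[], z, l, rfl, hz, by simp⟩
    · obtain ⟨x, hx, hP⟩ := h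
      rcases List.mem_cons.1 hx with rfl | hx
      · exact absurd hP hz
      · obtain ⟨a, x, b, rfl, h1, h2⟩ := ih ⟨x, hx, hP⟩
        refine ⟨z :: a, x, b, rfl, h1, ?_⟩
        intro y hy
        rcases List.mem_cons.1 hy with rfl | hy
        · exact hz
        · exact h2 y hy

theorem card_sub_le {P Q : E → Prop} (h : ∀ e, P e → Q e) :
    Nat.card {e // P e} ≤ Nat.card {e // Q e} :=
  Nat.card_le_card_of_injective (Subtype.map id h) (Subtype.map_injective h Function.injective_id)

theorem psi_mapsTo [LinearOrder E] (src tgt : E → V) (s : V) (σ : List (V ⊕ E))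
    (hσ : IsTraversal src tgt s σ) : IsParking src tgt s (Psi tgt s σ) := by
  obtain ⟨hn, hall, h1, h2⟩ := (isTraversal_iff _ _ _ _).1 hσ
  rintro A ⟨w, hw⟩
  obtain ⟨a, x, b, rfl, ⟨v, hv, rfl⟩, hfirst⟩ :=
    first_of (fun x => ∃ v ∈ A, x = Sum.inl v.1) σ ⟨_, hall (Sum.inl w.1), w, hw, rfl⟩
  refine ⟨v, hv, ?_⟩
  have hva : Sum.inl v.1 ∉ a := fun h => hfirst _ h ⟨v, hv, rfl⟩
  rw [psi_eq tgt s a b v hva]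
  obtain ⟨a', e, rfl, he⟩ := h1 a b v.1 rfl v.2
  have hpos : 1 ≤ cnt tgt (a' ++ [Sum.inr e]) v.1 := by
    rw [cnt_append, cnt_edge, if_pos he]; omega
  set a := a' ++ [Sum.inr e]
  have hle : cnt tgt a v.1 ≤ Nat.card {e : E // (∀ w ∈ A, src e ≠ w.1) ∧ tgt e = v.1} := by
    rw [cnt_eq_card tgt a (List.nodup_append.1 hn).1]
    apply card_sub_le
    rintro g ⟨hg, hgt⟩
    refine ⟨?_, hgt⟩
    intro w hw hs
    obtain ⟨c, d, hcd⟩ := List.append_of_mem hg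
    have := (h2 c (d ++ Sum.inl v.1 :: b) g (by rw [hcd]; simp)).1
    refine hfirst (Sum.inl (src g)) ?_ ⟨w, hw, by rw [hs]⟩
    rw [hcd]; simp [this]
  omega

theorem clash [LinearOrder E] (src tgt : E → V) (s : V) (p b c : List (V ⊕ E)) (v : V) (g : E)
    (h1 : IsTraversal src tgt s (p ++ Sum.inl v :: b))
    (h2 : IsTraversal src tgt s (p ++ Sum.inr g :: c)) (hvs : v ≠ s)
    (hpsi : Psi tgt s (p ++ Sum.inl v :: b) = Psi tgt s (p ++ Sum.inr g :: c)) : False := by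
  obtain ⟨hn, -, hr1, -⟩ := (isTraversal_iff _ _ _ _).1 h1
  obtain ⟨hn', hall, hr1', -⟩ := (isTraversal_iff _ _ _ _).1 h2
  have hvp : Sum.inl v ∉ p := by
    intro h
    exact (List.nodup_append.1 hn).2.2 _ h _ (List.mem_cons_self) rfl
  have hvc : Sum.inl v ∈ Sum.inr g :: c := by
    have := hall (Sum.inl v)
    rw [List.mem_append] at this
    tauto
  obtain ⟨d, x, b', hd, rfl, hfirst⟩ := first_of (fun x => x = Sum.inl v) _ ⟨_, hvc, rfl⟩
  have hvd : Sum.inl v ∉ d := fun h => hfirst _ h rfl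
  rw [hd] at hpsi hr1'
  have e1 := psi_eq tgt s p b ⟨v, hvs⟩ hvp
  have e2 := psi_eq tgt s (p ++ d) b' ⟨v, hvs⟩ (by simp [hvp, hvd])
  have e3 := congrFun hpsi ⟨v, hvs⟩
  rw [← List.append_assoc] at e3
  simp only at e1 e2
  rw [e1, e2] at e3
  obtain ⟨a', e, ha, he⟩ := hr1 p b v rfl hvs
  obtain ⟨a'', e', ha', he'⟩ := hr1' (p ++ d) b' v (by simp) hvs
  have hp : 1 ≤ cnt tgt p v := by
    rw [ha, cnt_append, cnt_edge, if_pos he]; omega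
  have hdpos : 1 ≤ cnt tgt d v := by
    rcases List.eq_nil_or_concat d with rfl | ⟨d', z, rfl⟩
    · simp at hd
    · have h' : (p ++ d') ++ [z] = a'' ++ [Sum.inr e'] := by simpa using ha'
      have hz := (List.append_inj' h' rfl).2
      simp at hz
      rw [List.concat_eq_append, cnt_append, hz, cnt_edge, if_pos he']; omega
  rw [cnt_append] at e3
  omega

theorem psi_injOn [LinearOrder E] (src tgt : E → V) (s : V) (σ τ : List (V ⊕ E))
    (hσ : IsTraversal src tgt s σ) (hτ : IsTraversal src tgt s τ)
    (h : Psi tgt s σ = Psi tgt s τ) : σ = τ := by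
  suffices H : ∀ (b c p : List (V ⊕ E)), IsTraversal src tgt s (p ++ b) →
      IsTraversal src tgt s (p ++ c) → Psi tgt s (p ++ b) = Psi tgt s (p ++ c) → b = c by
    exact H σ τ [] hσ hτ h
  intro b
  induction b with
  | nil =>
    intro c p hb hc hpsi
    rcases c with _ | ⟨y, c⟩
    · rfl
    · exfalso
      have := hb.2.1 y
      simp at this
      exact (List.nodup_append.1 hc.1).2.2 _ this _ List.mem_cons_self rfl
  | cons x b ih =>
    intro c p hb hc hpsi
    rcases c with _ | ⟨y, c⟩
    · exfalso
      have := hc.2.1 x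
      simp at this
      exact (List.nodup_append.1 hb.1).2.2 _ this _ List.mem_cons_self rfl
    suffices hxy : x = y by
      subst hxy
      rw [ih c (p ++ [x]) (by simpa using hb) (by simpa using hc) (by simpa using hpsi)]
    obtain ⟨hnb, -, hb1, hb2⟩ := (isTraversal_iff _ _ _ _).1 hb
    obtain ⟨hnc, -, hc1, hc2⟩ := (isTraversal_iff _ _ _ _).1 hc
    rcases List.eq_nil_or_concat p with rfl | ⟨p', z, hp⟩
    · obtain ⟨_, h1⟩ := head_eq hb1 hb2 (by simp)
      obtain ⟨_, h2⟩ := head_eq hc1 hc2 (by simp)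
      simp at h1 h2
      rw [h1.1, h2.1]
    have hpne : p ≠ [] := by rw [hp]; simp
    have hsp : Sum.inl s ∈ p := by
      obtain ⟨_, h1⟩ := head_eq hb1 hb2 (by simp)
      rcases p with _ | ⟨q, p⟩
      · exact absurd rfl hpne
      · simp at h1
        simp [h1.1]
    have hxp : x ∉ p := fun h => (List.nodup_append.1 hnb).2.2 _ h _ List.mem_cons_self rfl
    have hyp : y ∉ p := fun h => (List.nodup_append.1 hnc).2.2 _ h _ List.mem_cons_self rfl
    rcases x with v | e <;> rcases y with w | g
    · have hv : v ≠ s := by rintro rfl; exact hxp hsp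
      have hw : w ≠ s := by rintro rfl; exact hyp hsp
      obtain ⟨a, e, ha, he⟩ := hb1 p b v rfl hv
      obtain ⟨a', e', ha', he'⟩ := hc1 p c w rfl hw
      have := (List.append_inj' (ha.symm.trans ha') rfl).2
      simp at this
      rw [← he, ← he', this]
    · have hv : v ≠ s := by rintro rfl; exact hxp hsp
      exact (clash src tgt s p b c v g hb hc hv hpsi).elim
    · have hw : w ≠ s := by rintro rfl; exact hyp hsp
      exact (clash src tgt s p c b w e hc hb hw hpsi.symm).elim
    · have h1 := hb2 p b e rfl
      have h2 := hc2 p c g rfl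
      rw [le_antisymm (h2.2 e hxp h1.1) (h1.2 g hyp h2.1)]

/-- Invariant of the greedy construction of the preimage of `f`. -/
structure Inv [LinearOrder E] (src tgt : E → V) (s : V) (f : {v : V // v ≠ s} → ℕ)
    (p : List (V ⊕ E)) : Prop where
  nodup : p.Nodup
  smem : Sum.inl s ∈ p
  r1 : R1 tgt s p
  r2 : R2 src p
  unseen : ∀ v : {v : V // v ≠ s}, Sum.inl v.1 ∉ p → cnt tgt p v.1 ≤ f v
  seen : ∀ (v : {v : V // v ≠ s}) a b, p = a ++ Sum.inl v.1 :: b → cnt tgt a v.1 = f v + 1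

theorem inv_start [LinearOrder E] (src tgt : E → V) (s : V) (f : {v : V // v ≠ s} → ℕ) :
    Inv src tgt s f [Sum.inl s] := by
  have key : ∀ (a b : List (V ⊕ E)) x, [Sum.inl s] = a ++ x :: b → x = Sum.inl s := by
    intro a b x h
    have : x ∈ [(Sum.inl s : V ⊕ E)] := by rw [h]; simp
    simpa using this
  refine ⟨by simp, by simp, ?_, ?_, ?_, ?_⟩
  · intro a b v h hv
    have := key _ _ _ h
    simp at this
    exact absurd this hv
  · intro a b e h
    have := key _ _ _ h
    simp at this
  · intro v _
    rw [cnt_vert]; omega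
  · intro v a b h
    have := key _ _ _ h
    simp at this
    exact absurd this v.2

theorem inv_step [LinearOrder E] (src tgt : E → V) (s : V) (f : {v : V // v ≠ s} → ℕ)
    (hf : IsParking src tgt s f) (p : List (V ⊕ E)) (hp : Inv src tgt s f p) :
    (∀ x, x ∈ p) ∨ ∃ q, Inv src tgt s f q ∧ p.length < q.length := by
  classical
  by_cases hex : ∃ e : E, Sum.inr e ∉ p ∧ Sum.inl (src e) ∈ p
  · right
    obtain ⟨e, ⟨hep, hes⟩, hmax⟩ : ∃ e : E, (Sum.inr e ∉ p ∧ Sum.inl (src e) ∈ p) ∧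
        ∀ g : E, Sum.inr g ∉ p → Sum.inl (src g) ∈ p → g ≤ e := by
      obtain ⟨e0, he0⟩ := hex
      obtain ⟨e, he, hm⟩ := Finset.exists_max_image
        (Finset.univ.filter fun e : E => Sum.inr e ∉ p ∧ Sum.inl (src e) ∈ p) id
        ⟨e0, by simpa using he0⟩
      refine ⟨e, by simpa using he, fun g h1 h2 => hm g (by simp [h1, h2])⟩
    have hn : (p ++ [Sum.inr e]).Nodup := by
      rw [← List.concat_eq_append]; exact hp.nodup.concat hep
    have h1 : R1 tgt s (p ++ [Sum.inr e]) := by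
      intro a b v h hv
      rcases split_snoc h with ⟨-, -, h⟩ | ⟨b', h⟩
      · cases h
      · exact hp.r1 _ _ _ h hv
    have h2 : R2 src (p ++ [Sum.inr e]) := by
      intro a b g h
      rcases split_snoc h with ⟨-, rfl, hx⟩ | ⟨b', h⟩
      · cases hx
        exact ⟨hes, hmax⟩
      · exact hp.r2 _ _ _ h
    have hseen : ∀ (v : {v : V // v ≠ s}) a b, p ++ [Sum.inr e] = a ++ Sum.inl v.1 :: b →
        cnt tgt a v.1 = f v + 1 := by
      intro v a b h
      rcases split_snoc h with ⟨-, -, h⟩ | ⟨b', h⟩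
      · cases h
      · exact hp.seen _ _ _ h
    by_cases hc : ∃ v : {v : V // v ≠ s}, tgt e = v.1 ∧ Sum.inl v.1 ∉ p ∧ cnt tgt p v.1 = f v
    · obtain ⟨v, hev, hvp, hcv⟩ := hc
      refine ⟨(p ++ [Sum.inr e]) ++ [Sum.inl v.1], ⟨?_, ?_, ?_, ?_, ?_, ?_⟩, by simp⟩
      · rw [← List.concat_eq_append]; exact hn.concat (by simp [hvp])
      · simp [hp.smem]
      · intro a b w h hw
        rcases split_snoc h with ⟨-, rfl, hx⟩ | ⟨b', h⟩
        · cases hx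
          exact ⟨p, e, rfl, hev⟩
        · exact h1 _ _ _ h hw
      · intro a b g h
        rcases split_snoc h with ⟨-, -, h⟩ | ⟨b', h⟩
        · cases h
        · exact h2 _ _ _ h
      · intro w hw
        simp only [List.mem_append, not_or, List.mem_singleton] at hw
        have hne : tgt e ≠ w.1 := by
          intro h
          apply hw.2
          rw [← h, hev]
        rw [cnt_append, cnt_append, cnt_edge, cnt_vert, if_neg hne]
        exact hp.unseen w hw.1.1
      · intro w a b h
        rcases split_snoc h with ⟨-, rfl, hx⟩ | ⟨b', h⟩
        · have hwv : w = v := Subtype.ext (Sum.inl.inj hx).symm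
          subst hwv
          rw [cnt_append, cnt_edge, if_pos hev, hcv]
        · exact hseen _ _ _ h
    · refine ⟨p ++ [Sum.inr e], ⟨hn, ?_, h1, h2, ?_, hseen⟩, by simp⟩
      · simp [hp.smem]
      · intro v hv
        have hvp : Sum.inl v.1 ∉ p := by
          intro h; exact hv (by simp [h])
        have hle := hp.unseen v hvp
        rw [cnt_append, cnt_edge]
        split_ifs with h
        · have : cnt tgt p v.1 ≠ f v := fun h' => hc ⟨v, h, hvp, h'⟩
          omega
        · omega
  · left
    push Not at hex
    have hV : ∀ v : V, Sum.inl v ∈ p := by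
      by_contra hcon
      push Not at hcon
      obtain ⟨v0, hv0⟩ := hcon
      have hv0s : v0 ≠ s := by rintro rfl; exact hv0 hp.smem
      obtain ⟨v, hv, hlt⟩ := hf
        (Finset.univ.filter fun v : {v : V // v ≠ s} => Sum.inl v.1 ∉ p)
        ⟨⟨v0, hv0s⟩, by simpa using hv0⟩
      have hvp : Sum.inl v.1 ∉ p := by simpa using hv
      have h1 := hp.unseen v hvp
      rw [cnt_eq_card tgt p hp.nodup] at h1
      refine absurd (lt_of_lt_of_le hlt (le_trans (card_sub_le ?_) h1)) (lt_irrefl _)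
      rintro e ⟨he, het⟩
      refine ⟨?_, het⟩
      by_contra hep
      have hsrc : Sum.inl (src e) ∉ p := hex e hep
      have hss : src e ≠ s := by
        intro h; rw [h] at hsrc; exact hsrc hp.smem
      exact he ⟨src e, hss⟩ (by simpa using hsrc) rfl
    rintro (v | e)
    · exact hV v
    · by_contra h
      exact hex e h (hV _)

theorem psi_surjOn [LinearOrder E] (src tgt : E → V) (s : V) (f : {v : V // v ≠ s} → ℕ)
    (hf : IsParking src tgt s f) : ∃ σ, IsTraversal src tgt s σ ∧ Psi tgt s σ = f := by
  have main : ∀ n, (∃ p, Inv src tgt s f p ∧ ∀ x, x ∈ p) ∨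
      ∃ p, Inv src tgt s f p ∧ n ≤ p.length := by
    intro n
    induction n with
    | zero => exact Or.inr ⟨_, inv_start src tgt s f, by simp⟩
    | succ n ih =>
      rcases ih with h | ⟨p, hp, hl⟩
      · exact Or.inl h
      · rcases inv_step src tgt s f hf p hp with h | ⟨q, hq, hlt⟩
        · exact Or.inl ⟨p, hp, h⟩
        · exact Or.inr ⟨q, hq, by omega⟩
  rcases main (Fintype.card (V ⊕ E) + 1) with ⟨p, hp, hall⟩ | ⟨p, hp, hl⟩
  · refine ⟨p, (isTraversal_iff _ _ _ _).2 ⟨hp.nodup, hall, hp.r1, hp.r2⟩, ?_⟩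
    funext v
    obtain ⟨a, x, b, hab, rfl, hfirst⟩ :=
      first_of (fun x => x = Sum.inl v.1) p ⟨_, hall _, rfl⟩
    have h1 := hp.seen v a b hab
    rw [hab, psi_eq tgt s a b v (fun h => hfirst _ h rfl), h1]
    omega
  · have := hp.nodup.length_le_card
    omega

/-- `Ψ` is a bijection from the set of s-decreasing traversals of `G`
onto the set of `G^r`-parking functions rooted at `s`. -/
theorem psi_bijection [Nonempty V] [LinearOrder E] (src tgt : E → V)
    (hG : StronglyConnected src tgt) (s : V) :
    Set.BijOn (Psi tgt s)
      {σ : List (V ⊕ E) | IsTraversal src tgt s σ}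
      {f : {v : V // v ≠ s} → ℕ | IsParking src tgt s f} := by
  refine ⟨?_, ?_, ?_⟩
  · intro σ hσ
    exact psi_mapsTo src tgt s σ hσ
  · intro σ hσ τ hτ h
    exact psi_injOn src tgt s σ τ hσ hτ h
  · intro f hf
    exact psi_surjOn src tgt s f hf

end SandpileBM
end
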